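/- With I₀(h) = ∫_{r₁(h)}^{r₂(h)} dx/√(P(x) − h) and I₁(h) = ∫_{r₁(h)}^{r₂(h)} x·dx/√(P(x) − h), one has lim_{h→0⁺} (I₀(h) − I₁(h)) = 2√3. Equivalently, the Abelian integral ∫_{γ_h} (1 − x₁) dt tends to 2√3 as h → 0⁺. -/

import Mathlib

open Filter Topology intervalIntegral

/-!
For `0 < h < 4` write `a < b < c` for the roots, so that `P(x) - h = (x - a)(b - x)(c - x)` on
`[a, b]`. The substitution `x = a + (b - a) sin² θ` removes both endpoint singularities
(`integral_sin_sq_subst`): `dx / √((x - a)(b - x)) = 2 dθ`, hence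
`I₀ - I₁ = ∫_0^{π/2} 2 (1 - x) / √(c - x) dθ`.
Since `x ≤ b < 1 < c` (`root_facts`), the integrand is at most `2 √(c - x) ≤ 4`. As `h → 0⁺` the
roots tend to `-2, 1, 1`, so `1 - x → 3 cos² θ` and the integrand tends to `2 √3 cos θ`.
Dominated convergence gives the limit `∫_0^{π/2} 2 √3 cos θ dθ = 2 √3`.
-/

/-- The substitution `x = a + (b - a) sin² θ` in an integral whose weight is the inverse square
root of a cubic with roots `a < b` and `c`, integrated between `a` and `b`. No integrability is
needed: the change of variables is injective on the open interval. -/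
lemma integral_sin_sq_subst (g : ℝ → ℝ) {a b c : ℝ} (hab : a < b) :
    ∫ x in a..b, g x * (Real.sqrt ((x - a) * (b - x) * (c - x)))⁻¹ =
      ∫ t in (0:ℝ)..(Real.pi / 2), 2 * g (a + (b - a) * Real.sin t ^ 2) *
        (Real.sqrt (c - (a + (b - a) * Real.sin t ^ 2)))⁻¹ := by
  have hpi := Real.pi_pos
  have hba : 0 < b - a := sub_pos.2 hab
  rw [integral_of_le hab.le, integral_of_le (by positivity),
    MeasureTheory.integral_Ioc_eq_integral_Ioo, MeasureTheory.integral_Ioc_eq_integral_Ioo]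
  have hsin : ∀ t ∈ Set.Ioo (0:ℝ) (Real.pi / 2), 0 < Real.sin t := fun t ht =>
    Real.sin_pos_of_pos_of_lt_pi ht.1 (by linarith [ht.2])
  have hcos : ∀ t ∈ Set.Ioo (0:ℝ) (Real.pi / 2), 0 < Real.cos t := fun t ht =>
    Real.cos_pos_of_mem_Ioo ⟨by linarith [ht.1], ht.2⟩
  have himg : (fun t => a + (b - a) * Real.sin t ^ 2) '' Set.Ioo 0 (Real.pi / 2)
      = Set.Ioo a b := by
    ext x
    constructor
    · rintro ⟨t, ht, rfl⟩
      have h1 := hsin t ht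
      have h2 := hcos t ht
      have h3 := Real.sin_sq_add_cos_sq t
      have h4 : 0 < (b - a) * Real.sin t ^ 2 := by positivity
      have h5 : 0 < (b - a) * Real.cos t ^ 2 := by positivity
      have h6 : (b - a) * Real.sin t ^ 2 + (b - a) * Real.cos t ^ 2 = b - a := by
        rw [← mul_add, h3, mul_one]
      exact ⟨by simp only; linarith, by simp only; linarith⟩
    · rintro ⟨hx1, hx2⟩
      have hq0 : 0 < (x - a) / (b - a) := div_pos (by linarith) hba
      have hq1 : (x - a) / (b - a) < 1 := by rw [div_lt_one hba]; linarith
      have hs0 : 0 < Real.sqrt ((x - a) / (b - a)) := Real.sqrt_pos.2 hq0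
      have hs1 : Real.sqrt ((x - a) / (b - a)) < 1 := by
        rw [Real.sqrt_lt' one_pos]; simpa using hq1
      refine ⟨Real.arcsin (Real.sqrt ((x - a) / (b - a))),
        ⟨Real.arcsin_pos.2 hs0, Real.arcsin_lt_pi_div_two.2 hs1⟩, ?_⟩
      simp only
      rw [Real.sin_arcsin (by linarith) hs1.le, Real.sq_sqrt hq0.le]
      field_simp
      ring
  have hinj : Set.InjOn (fun t => a + (b - a) * Real.sin t ^ 2) (Set.Ioo 0 (Real.pi / 2)) := by
    intro s hs t ht hst
    simp only at hst
    have h1 : Real.sin s ^ 2 = Real.sin t ^ 2 := by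
      have := add_left_cancel hst
      exact mul_left_cancel₀ hba.ne' this
    have h2 : Real.sin s = Real.sin t :=
      (pow_left_inj₀ (hsin s hs).le (hsin t ht).le two_ne_zero).1 h1
    exact Real.injOn_sin ⟨by linarith [hs.1], hs.2.le⟩ ⟨by linarith [ht.1], ht.2.le⟩ h2
  have hder : ∀ t ∈ Set.Ioo (0:ℝ) (Real.pi / 2),
      HasDerivWithinAt (fun t => a + (b - a) * Real.sin t ^ 2)
        ((b - a) * (2 * Real.sin t * Real.cos t)) (Set.Ioo 0 (Real.pi / 2)) t := by
    intro t _
    have := (((Real.hasDerivAt_sin t).pow 2).const_mul (b - a)).const_add a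
    refine HasDerivAt.hasDerivWithinAt ?_
    convert this using 1 <;> simp
  rw [← himg, MeasureTheory.integral_image_eq_integral_abs_deriv_smul measurableSet_Ioo hder hinj]
  refine MeasureTheory.setIntegral_congr_fun measurableSet_Ioo ?_
  intro t ht
  have h1 := hsin t ht
  have h2 := hcos t ht
  have h3 := Real.sin_sq_add_cos_sq t
  simp only [smul_eq_mul]
  have e1 : (a + (b - a) * Real.sin t ^ 2 - a) * (b - (a + (b - a) * Real.sin t ^ 2))
      = ((b - a) * (Real.sin t * Real.cos t)) ^ 2 := by
    have : Real.cos t ^ 2 = 1 - Real.sin t ^ 2 := by linarith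
    rw [mul_pow, mul_pow, this]; ring
  have hp : 0 < (b - a) * (Real.sin t * Real.cos t) := by positivity
  rw [e1, Real.sqrt_mul (sq_nonneg _), Real.sqrt_sq hp.le, abs_of_pos (by positivity), mul_inv]
  have : (b - a) * (2 * Real.sin t * Real.cos t) = 2 * ((b - a) * (Real.sin t * Real.cos t)) := by
    ring
  rw [this]
  field_simp

/-- Factorisation of `P - h` and quantitative localisation of its roots near `-2, 1, 1`. -/
lemma root_facts {a b c h : ℝ} (hh : 0 < h) (hab : a < b) (hbc : b < c)
    (ha : a ^ 3 - 3 * a + 2 - h = 0) (hb : b ^ 3 - 3 * b + 2 - h = 0)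
    (hc : c ^ 3 - 3 * c + 2 - h = 0) :
    (∀ x, x ^ 3 - 3 * x + 2 - h = (x - a) * (b - x) * (c - x)) ∧ -2 < a ∧ a ≤ -2 + h ∧
      b < 1 ∧ 1 - √h - h ≤ b ∧ 1 < c ∧ c ≤ 1 + √h := by
  have e1 : a ^ 2 + a * b + b ^ 2 = 3 := by
    have : (b - a) * (a ^ 2 + a * b + b ^ 2 - 3) = 0 := by linear_combination hb - ha
    rcases mul_eq_zero.1 this with h | h <;> linarith
  have e2 : b ^ 2 + b * c + c ^ 2 = 3 := by
    have : (c - b) * (b ^ 2 + b * c + c ^ 2 - 3) = 0 := by linear_combination hc - hb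
    rcases mul_eq_zero.1 this with h | h <;> linarith
  have e3 : c = -a - b := by
    have : (c - a) * (a + b + c) = 0 := by linear_combination e2 - e1
    rcases mul_eq_zero.1 this with h | h <;> linarith
  have fac : ∀ x, x ^ 3 - 3 * x + 2 - h = (x - a) * (b - x) * (c - x) := by
    intro x
    rw [e3]
    linear_combination (x - a) * e1 + ha
  have ha0 : a < 0 := by linarith
  have p1 : (1 - a) * ((1 - b) * (c - 1)) = h := by linear_combination (fac 1)
  have hq : 0 < (1 - b) * (c - 1) := by
    by_contra hn
    nlinarith [mul_nonneg (by linarith : 0 ≤ 1 - a) (by linarith : 0 ≤ -((1 - b) * (c - 1)))]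
  have hb1 : b < 1 := by
    by_contra hn
    nlinarith [mul_nonneg (by linarith : 0 ≤ b - 1) (by linarith : 0 ≤ c - 1)]
  have hc1 : 1 < c := by
    by_contra hn
    nlinarith [mul_nonneg (by linarith : 0 ≤ 1 - b) (by linarith : 0 ≤ 1 - c)]
  have p2 : (1 - a) ^ 2 * (a + 2) = h := by linear_combination ha
  have ha2 : -2 < a := by
    by_contra hn
    nlinarith [mul_nonneg (sq_nonneg (1 - a)) (by linarith : 0 ≤ -(a + 2))]
  have ha3 : a ≤ -2 + h := by
    have h1 : 0 ≤ (1 - a) ^ 2 - 1 := by nlinarith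
    linarith [mul_nonneg h1 (by linarith : 0 ≤ a + 2)]
  have hq2 : (1 - b) * (c - 1) ≤ h := by
    linarith [mul_pos (neg_pos.2 ha0) hq]
  -- `1 - b = (c - 1) + (a + 2)`, so `c - 1` is the smaller factor in `hq2`.
  have hc2 : c - 1 ≤ √h := by
    apply Real.le_sqrt_of_sq_le
    nlinarith [mul_nonneg (by linarith : 0 ≤ c - 1) (by linarith : 0 ≤ a + 2)]
  exact ⟨fac, ha2, ha3, hb1, by linarith, hc1, by linarith⟩

/-- With `I₀(h) = ∫_{r₁(h)}^{r₂(h)} dx/√(x³−3x+2−h)` and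
`I₁(h) = ∫_{r₁(h)}^{r₂(h)} x dx/√(x³−3x+2−h)`, one has
`lim_{h→0⁺} (I₀(h) − I₁(h)) = 2√3`. -/
theorem stmt_8 (r₁ r₂ r₃ : ℝ → ℝ)
    (hlt : ∀ h ∈ Set.Ioo (0:ℝ) 4, r₁ h < r₂ h ∧ r₂ h < r₃ h)
    (hroots : ∀ h ∈ Set.Ioo (0:ℝ) 4, ∀ x : ℝ,
      x ^ 3 - 3 * x + 2 - h = 0 ↔ (x = r₁ h ∨ x = r₂ h ∨ x = r₃ h))
    (I₀ I₁ : ℝ → ℝ)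
    (hI₀ : ∀ h, I₀ h = ∫ x in (r₁ h)..(r₂ h), (Real.sqrt (x ^ 3 - 3 * x + 2 - h))⁻¹)
    (hI₁ : ∀ h, I₁ h = ∫ x in (r₁ h)..(r₂ h), x * (Real.sqrt (x ^ 3 - 3 * x + 2 - h))⁻¹) :
    Tendsto (fun h => I₀ h - I₁ h) (𝓝[>] 0) (𝓝 (2 * Real.sqrt 3)) := by
  have hpi := Real.pi_pos
  have facts := fun h (hh : h ∈ Set.Ioo (0:ℝ) 4) =>
    root_facts hh.1 (hlt h hh).1 (hlt h hh).2 ((hroots h hh _).2 (Or.inl rfl))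
      ((hroots h hh _).2 (Or.inr (Or.inl rfl))) ((hroots h hh _).2 (Or.inr (Or.inr rfl)))
  have hev4 : ∀ᶠ h in 𝓝[>] (0:ℝ), h ∈ Set.Ioo (0:ℝ) 4 := Ioo_mem_nhdsGT (by norm_num)
  have hev1 : ∀ᶠ h in 𝓝[>] (0:ℝ), h ∈ Set.Ioo (0:ℝ) 1 := Ioo_mem_nhdsGT (by norm_num)
  have lim_id : Tendsto (fun h : ℝ => h) (𝓝[>] 0) (𝓝 0) :=
    tendsto_nhdsWithin_of_tendsto_nhds tendsto_id
  have lim_sqrt : Tendsto (fun h : ℝ => √h) (𝓝[>] 0) (𝓝 0) := by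
    have := (Real.continuous_sqrt.tendsto 0).mono_left (nhdsWithin_le_nhds (s := Set.Ioi 0))
    simpa using this
  have lim1 : Tendsto r₁ (𝓝[>] 0) (𝓝 (-2)) := by
    refine tendsto_of_tendsto_of_tendsto_of_le_of_le' tendsto_const_nhds
      (h := fun h => -2 + h) (by simpa using lim_id.const_add (-2)) ?_ ?_
    · filter_upwards [hev4] with h hh using (facts h hh).2.1.le
    · filter_upwards [hev4] with h hh using (facts h hh).2.2.1
  have lim2 : Tendsto r₂ (𝓝[>] 0) (𝓝 1) := by
    refine tendsto_of_tendsto_of_tendsto_of_le_of_le' (g := fun h => 1 - √h - h)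
      (by simpa using (lim_sqrt.const_sub 1).sub lim_id) tendsto_const_nhds ?_ ?_
    · filter_upwards [hev4] with h hh using (facts h hh).2.2.2.2.1
    · filter_upwards [hev4] with h hh using (facts h hh).2.2.2.1.le
  have lim3 : Tendsto r₃ (𝓝[>] 0) (𝓝 1) := by
    refine tendsto_of_tendsto_of_tendsto_of_le_of_le' tendsto_const_nhds
      (h := fun h => 1 + √h) (by simpa using lim_sqrt.const_add 1) ?_ ?_
    · filter_upwards [hev4] with h hh using (facts h hh).2.2.2.2.2.1.le
    · filter_upwards [hev4] with h hh using (facts h hh).2.2.2.2.2.2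
  -- `X h t` is the abscissa corresponding to the angle `t`.
  set X : ℝ → ℝ → ℝ := fun h t => r₁ h + (r₂ h - r₁ h) * Real.sin t ^ 2 with hX
  have Xcont : ∀ h, Continuous (X h) := fun h => by simp only [hX]; fun_prop
  have Xle : ∀ h ∈ Set.Ioo (0:ℝ) 4, ∀ t, r₁ h ≤ X h t ∧ X h t ≤ r₂ h := by
    intro h hh t
    have h1 := (hlt h hh).1
    have h2 := Real.sin_sq_le_one t
    have h3 := sq_nonneg (Real.sin t)
    simp only [hX]
    constructor <;> nlinarith
  have wcont : ∀ h ∈ Set.Ioo (0:ℝ) 4, Continuous fun t => (√(r₃ h - X h t))⁻¹ := by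
    intro h hh
    refine Continuous.inv₀ (by have := Xcont h; fun_prop) fun t => ?_
    exact (Real.sqrt_pos.2 (by linarith [(Xle h hh t).2, (hlt h hh).2])).ne'
  have key : ∀ h ∈ Set.Ioo (0:ℝ) 4, I₀ h - I₁ h =
      ∫ t in (0:ℝ)..(Real.pi / 2), 2 * (1 - X h t) * (√(r₃ h - X h t))⁻¹ := by
    intro h hh
    have e0 := integral_sin_sq_subst (fun _ => 1) (hlt h hh).1 (c := r₃ h)
    have e1 := integral_sin_sq_subst (fun x => x) (hlt h hh).1 (c := r₃ h)
    simp only [← (facts h hh).1, one_mul] at e0 e1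
    rw [hI₀, hI₁, e0, e1, ← intervalIntegral.integral_sub]
    · refine integral_congr fun t _ => ?_
      simp only [hX]; ring
    · exact (continuous_const.mul (wcont h hh)).intervalIntegrable _ _
    · exact ((continuous_const.mul (Xcont h)).mul (wcont h hh)).intervalIntegrable _ _
  have hval : ∫ t in (0:ℝ)..(Real.pi / 2), 2 * √3 * Real.cos t = 2 * √3 := by
    rw [integral_const_mul, integral_cos]; simp
  rw [← hval]
  refine Tendsto.congr' (f₁ := fun h => ∫ t in (0:ℝ)..(Real.pi / 2),
    2 * (1 - X h t) * (√(r₃ h - X h t))⁻¹) ?_ ?_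
  · filter_upwards [hev4] with h hh using (key h hh).symm
  refine tendsto_integral_filter_of_dominated_convergence (fun _ => 4) ?_ ?_ ?_ ?_
  · filter_upwards [hev4] with h hh
    have h1 := wcont h hh
    have h2 := Xcont h
    exact Continuous.aestronglyMeasurable (by fun_prop)
  · filter_upwards [hev1] with h hh
    refine Eventually.of_forall fun t _ => ?_
    have hh4 : h ∈ Set.Ioo (0:ℝ) 4 := ⟨hh.1, by linarith [hh.2]⟩
    obtain ⟨-, f1, f2, f3, f4, f5, f6⟩ := facts h hh4
    obtain ⟨x1, x2⟩ := Xle h hh4 t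
    have hs : √h ≤ 1 := Real.sqrt_le_one.2 hh.2.le
    have hpos : 0 < r₃ h - X h t := by linarith
    have hsp : 0 < √(r₃ h - X h t) := Real.sqrt_pos.2 hpos
    have hs2 : √(r₃ h - X h t) ≤ 2 := by
      rw [Real.sqrt_le_left (by norm_num)]; linarith
    have hsq := Real.sq_sqrt hpos.le
    rw [Real.norm_of_nonneg (mul_nonneg (by linarith) (inv_nonneg.2 hsp.le)), ← div_eq_mul_inv,
      div_le_iff₀ hsp]
    nlinarith
  · exact intervalIntegrable_const
  · -- At `t = π / 2` the limiting integrand is `0 / 0`; this point is discarded.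
    have hne : ∀ᵐ t : ℝ, t ≠ Real.pi / 2 := by
      simp [MeasureTheory.ae_iff]
    filter_upwards [hne] with t hne ht
    rw [Set.uIoc_of_le (by positivity)] at ht
    have hc : 0 < Real.cos t :=
      Real.cos_pos_of_mem_Ioo ⟨by linarith [ht.1], lt_of_le_of_ne ht.2 hne⟩
    have limX : Tendsto (fun h => X h t) (𝓝[>] 0) (𝓝 (-2 + (1 - -2) * Real.sin t ^ 2)) :=
      lim1.add ((lim2.sub lim1).mul_const _)
    have e : 1 - (-2 + (1 - -2) * Real.sin t ^ 2) = 3 * Real.cos t ^ 2 := by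
      rw [Real.cos_sq']; ring
    have es : √(1 - (-2 + (1 - -2) * Real.sin t ^ 2)) = √3 * Real.cos t := by
      rw [e, Real.sqrt_mul (by norm_num), Real.sqrt_sq hc.le]
    have h3 : 0 < √(3:ℝ) := by positivity
    have := ((limX.const_sub 1).const_mul 2).mul
      ((lim3.sub limX).sqrt.inv₀ (by rw [es]; positivity))
    rw [es, e] at this
    convert this using 2
    have h33 : √(3:ℝ) ^ 2 = 3 := Real.sq_sqrt (by norm_num)
    field_simp
    linear_combination h33
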